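/- Let ψ : ℝ³ → (0,∞) be smooth, radial, with ‖ψ‖_{L²} = 1, and suppose ψ together with all its partial derivatives up to second order is bounded by C₀ e^{−|x|/C₀} for some C₀ > 0. Define φ(z) := ∫_{ℝ³} ψ(x)² / (2π²|z−x|²) dx, H(y) := ∫_{ℝ³} ψ(x)ψ(x+y) dx, l_y(z) := H(y) φ(z) − ∫_{ℝ³} ψ(x)ψ(x+y) / (2π²|x−z|²) dx, and w_{0,y} := φ − τ_y φ with (τ_y f)(z) = f(z−y). Let Π₀ be the orthogonal projection in L²(ℝ³;ℂ) onto span{∂₁φ, ∂₂φ, ∂₃φ} and Π₁ := 1 − Π₀. Then there is a constant C > 0 such that for all y ∈ ℝ³: ‖ w_{0,y} − (y·∇)φ ‖_{L²} + ‖ Π₁ l_y ‖_{L²} + ‖ Π₀ l_y + (1/2)(y·∇)φ ‖_{L²} ≤ C |y|². -/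

import Mathlib

open MeasureTheory Real Complex
open scoped ComplexConjugate

noncomputable section

abbrev E3 := EuclideanSpace ℝ (Fin 3)

def pk (u : E3) : ℝ := (2 * π ^ 2 * ‖u‖ ^ 2)⁻¹
def pE (c : ℝ) (x : E3) : ℝ := Real.exp (-‖x‖ / c)

lemma pk_nonneg (u : E3) : 0 ≤ pk u := by unfold pk; positivity
lemma pE_pos (c : ℝ) (u : E3) : 0 < pE c u := Real.exp_pos _
lemma pE_le_one {c : ℝ} (hc : 0 < c) (u : E3) : pE c u ≤ 1 := by
  unfold pE
  rw [Real.exp_le_one_iff]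
  have : 0 ≤ ‖u‖ / c := by positivity
  rw [neg_div]; linarith
lemma pE_cont (c : ℝ) : Continuous (pE c) := by unfold pE; fun_prop
lemma pk_meas : Measurable pk := by unfold pk; fun_prop

lemma pk_intOn : IntegrableOn pk (Metric.ball 0 1) := by
  have h := (integrableOn_fun_norm_addHaar (volume : Measure E3) (f := fun r : ℝ => (2 * π ^ 2 * r ^ 2)⁻¹) (r := 1)).2 (by
    have : IntegrableOn (fun _ : ℝ => (2 * π ^ 2)⁻¹) (Set.Ioo 0 1) := by
      exact integrableOn_const (by simp) (by finiteness)
    refine this.congr_fun ?_ measurableSet_Ioo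
    intro y hy
    have : y ≠ 0 := hy.1.ne'
    simp
    field_simp)
  exact h

lemma pE_decay {c : ℝ} (hc : 0 < c) : ∃ K > 0, ∀ x : E3,
    (1 + 2 * ‖x‖ ^ 2) * pE c x ≤ K * (1 + ‖x‖ ^ 2) ^ (-2 : ℝ) := by
  refine ⟨16 * (1 + (Nat.factorial 8 : ℝ) * c ^ 8), by positivity, fun x => ?_⟩
  set r := ‖x‖ with hr
  have hr0 : 0 ≤ r := norm_nonneg x
  have h8 := Real.pow_div_factorial_le_exp (r / c) (by positivity) 8
  have h1 : 1 ≤ Real.exp (r / c) := Real.one_le_exp (by positivity)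
  have hE : pE c x = (Real.exp (r / c))⁻¹ := by
    unfold pE; rw [← Real.exp_neg, neg_div]
  set e := Real.exp (r / c)
  have h8' : r ^ 8 ≤ (Nat.factorial 8 : ℝ) * c ^ 8 * e := by
    rw [div_pow, div_div, div_le_iff₀ (by positivity)] at h8
    linarith
  have he : (0:ℝ) < e := by linarith
  rw [hE, show (-2 : ℝ) = -((2 : ℕ) : ℝ) by norm_num, Real.rpow_neg (by positivity), Real.rpow_natCast,
    ← div_eq_mul_inv, ← div_eq_mul_inv, div_le_div_iff₀ he (by positivity)]
  have hp : (1 + 2 * r ^ 2) * (1 + r ^ 2) ^ 2 ≤ 16 * (1 + r ^ 8) := by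
    have : ∀ s : ℝ, 0 ≤ s → (1 + 2 * s) * (1 + s) ^ 2 ≤ 16 * (1 + s ^ 4) := by
      intro s hs
      nlinarith [sq_nonneg (s - 1), sq_nonneg (s ^ 2 - s), sq_nonneg (s ^ 2 - 1)]
    have := this (r ^ 2) (by positivity)
    ring_nf at this ⊢; linarith
  have h9 : (1 : ℝ) + r ^ 8 ≤ (1 + (Nat.factorial 8 : ℝ) * c ^ 8) * e := by
    linarith
  calc _ ≤ _ := hp
    _ ≤ _ := by rw [mul_assoc]; gcongr

def pP (z : E3) : ℝ := (1 + ‖z‖ ^ 2)⁻¹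
lemma pP_pos (z : E3) : 0 < pP z := by unfold pP; positivity
lemma pP_cont : Continuous pP := by
  unfold pP
  refine Continuous.inv₀ (by fun_prop) (fun z => by positivity)

lemma pP_rpow (z : E3) : (1 + ‖z‖ ^ 2) ^ (-2 : ℝ) = pP z ^ 2 := by
  rw [show (-2 : ℝ) = -((2 : ℕ) : ℝ) by norm_num, Real.rpow_neg (by positivity), Real.rpow_natCast]
  simp [pP]

lemma pP_sq_int : Integrable (fun z : E3 => pP z ^ 2) := by
  have := integrable_rpow_neg_one_add_norm_sq (E := E3) (μ := volume) (r := 4) (by simp; norm_num)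
  refine this.congr (Filter.Eventually.of_forall fun z => ?_)
  show _ = pP z ^ 2
  rw [← pP_rpow]; norm_num

/-- The main kernel estimate. -/
lemma pk_pE {c : ℝ} (hc : 0 < c) : ∃ K > 0, ∀ z : E3,
    Integrable (fun x => pk (z - x) * pE c x) ∧ ∫ x, pk (z - x) * pE c x ≤ K * pP z := by
  obtain ⟨K₁, hK₁, hK⟩ := pE_decay hc
  set J : E3 → ℝ := (Metric.ball (0:E3) 1).indicator pk with hJ
  have hJi : Integrable J := pk_intOn.integrable_indicator Metric.isOpen_ball.measurableSet
  have hJ0 : ∀ u, 0 ≤ J u := fun u => Set.indicator_nonneg (fun u _ => pk_nonneg u) u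
  have hkJ : ∀ u, pk u ≤ J u + 1 := by
    intro u
    by_cases h : u ∈ Metric.ball (0:E3) 1
    · simp [hJ, h]
    · simp only [hJ, h, not_false_eq_true, Set.indicator_of_notMem, zero_add]
      have : 1 ≤ ‖u‖ := by simpa using h
      unfold pk
      apply inv_le_one_of_one_le₀
      have : 1 ≤ ‖u‖ ^ 2 := one_le_pow₀ this
      have : 1 ≤ π ^ 2 := one_le_pow₀ (by linarith [Real.pi_gt_three])
      nlinarith
  have hPi := pP_sq_int
  have hP1 : ∀ z, pP z ^ 2 ≤ 1 := fun z => by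
    unfold pP
    apply pow_le_one₀ (by positivity)
    apply inv_le_one_of_one_le₀
    nlinarith [sq_nonneg ‖z‖]
  -- pointwise bound
  have hb : ∀ z x, (1 + ‖z‖ ^ 2) * (pk (z - x) * pE c x)
      ≤ K₁ * J (z - x) + 2 * K₁ * pP x ^ 2 := by
    intro z x
    have h1 := hK x
    rw [pP_rpow] at h1
    have h2 : pk (z - x) * ‖z - x‖ ^ 2 ≤ 1/2 := by
      unfold pk
      by_cases h : ‖z - x‖ = 0
      · simp [h]
      · have : 1 ≤ π ^ 2 := one_le_pow₀ (by linarith [Real.pi_gt_three])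
        field_simp
        linarith
    have h3 : ‖z‖ ^ 2 ≤ 2 * ‖z - x‖ ^ 2 + 2 * ‖x‖ ^ 2 := by
      have : ‖z‖ ≤ ‖z - x‖ + ‖x‖ := by simpa using norm_add_le (z - x) x
      have := pow_le_pow_left₀ (norm_nonneg z) this 2
      nlinarith [sq_nonneg (‖z - x‖ - ‖x‖)]
    have hk0 := pk_nonneg (z - x)
    have hE0 := pE_pos c x
    have hEl : pE c x ≤ K₁ * pP x ^ 2 := by
      refine le_trans ?_ h1
      nlinarith [sq_nonneg ‖x‖]
    calc (1 + ‖z‖ ^ 2) * (pk (z - x) * pE c x)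
        ≤ (1 + (2 * ‖z - x‖ ^ 2 + 2 * ‖x‖ ^ 2)) * (pk (z - x) * pE c x) := by gcongr
      _ = 2 * (pk (z - x) * ‖z - x‖ ^ 2) * pE c x + pk (z - x) * ((1 + 2 * ‖x‖ ^ 2) * pE c x) := by ring
      _ ≤ 2 * (1/2) * (K₁ * pP x ^ 2) + (J (z - x) + 1) * (K₁ * pP x ^ 2) := by
          gcongr
          · linarith [hJ0 (z - x)]
          · exact hkJ _
      _ = K₁ * (J (z - x) * pP x ^ 2) + 2 * K₁ * pP x ^ 2 := by ring
      _ ≤ K₁ * (J (z - x) * 1) + 2 * K₁ * pP x ^ 2 := by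
          gcongr
          · exact hJ0 _
          · exact hP1 x
      _ = _ := by ring
  have hi : ∀ z, Integrable (fun x => K₁ * J (z - x) + 2 * K₁ * pP x ^ 2) := fun z =>
    ((hJi.comp_sub_left z).const_mul _).add (hPi.const_mul _)
  have hm : ∀ z, AEStronglyMeasurable (fun x => pk (z - x) * pE c x) volume := fun z => by
    apply Measurable.aestronglyMeasurable
    have := pk_meas
    have := (pE_cont c).measurable
    fun_prop
  have hint : ∀ z, Integrable (fun x => pk (z - x) * pE c x) := fun z => by
    refine (hi z).mono' (hm z) (Filter.Eventually.of_forall fun x => ?_)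
    have h0 : 0 ≤ pk (z - x) * pE c x := mul_nonneg (pk_nonneg _) (pE_pos c x).le
    rw [Real.norm_of_nonneg h0]
    refine le_trans ?_ (hb z x)
    nlinarith [sq_nonneg ‖z‖]
  refine ⟨K₁ * (∫ x, J x) + 2 * K₁ * (∫ x : E3, pP x ^ 2) + 1, ?_, fun z => ⟨hint z, ?_⟩⟩
  · have : 0 ≤ ∫ x, J x := integral_nonneg hJ0
    have : 0 ≤ ∫ x : E3, pP x ^ 2 := integral_nonneg (fun x => by positivity)
    positivity
  · have h := integral_mono ((hint z).const_mul (1 + ‖z‖ ^ 2)) (hi z) (hb z)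
    rw [integral_const_mul, integral_add ((hJi.comp_sub_left z).const_mul _) (hPi.const_mul _),
      integral_const_mul, integral_const_mul, integral_sub_left_eq_self] at h
    unfold pP at h ⊢
    rw [← div_eq_mul_inv, le_div_iff₀ (by positivity)]
    linarith

/-- convolution of the kernel with an exponentially bounded function -/
lemma pk_conv {c K : ℝ} (hK : ∀ z : E3,
    Integrable (fun x => pk (z - x) * pE c x) ∧ ∫ x, pk (z - x) * pE c x ≤ K * pP z)
    (G : E3 → ℝ) (hG : Continuous G) (A : ℝ) (hA0 : 0 ≤ A) (hA : ∀ x, |G x| ≤ A * pE c x) (z : E3) :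
    Integrable (fun x => pk (z - x) * G x) ∧ |∫ x, pk (z - x) * G x| ≤ A * K * pP z := by
  have hb : ∀ x, ‖pk (z - x) * G x‖ ≤ A * (pk (z - x) * pE c x) := fun x => by
    rw [norm_mul, Real.norm_of_nonneg (pk_nonneg _), Real.norm_eq_abs]
    calc _ ≤ pk (z - x) * (A * pE c x) := mul_le_mul_of_nonneg_left (hA x) (pk_nonneg _)
      _ = _ := by ring
  have hi := (hK z).1.const_mul A
  refine ⟨hi.mono' ?_ (Filter.Eventually.of_forall hb), ?_⟩
  · apply Measurable.aestronglyMeasurable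
    have := pk_meas
    have := hG.measurable
    fun_prop
  · rw [← Real.norm_eq_abs]
    refine (norm_integral_le_of_norm_le hi (Filter.Eventually.of_forall hb)).trans ?_
    rw [integral_const_mul, mul_assoc]
    exact mul_le_mul_of_nonneg_left (hK z).2 hA0

lemma pE_int {c : ℝ} (hc : 0 < c) : Integrable (pE c) := by
  obtain ⟨K₁, hK₁, hK⟩ := pE_decay hc
  refine (pP_sq_int.const_mul K₁).mono' (pE_cont c).aestronglyMeasurable
    (Filter.Eventually.of_forall fun x => ?_)
  rw [Real.norm_of_nonneg (pE_pos c x).le, ← pP_rpow]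
  refine le_trans ?_ (hK x)
  nlinarith [sq_nonneg ‖x‖, pE_pos c x]

lemma pE_shift {c : ℝ} (hc : 0 < c) (u v : E3) : pE c u ≤ Real.exp (‖u - v‖ / c) * pE c v := by
  unfold pE
  rw [← Real.exp_add, Real.exp_le_exp, ← add_div]
  gcongr
  have := norm_sub_norm_le v u
  rw [norm_sub_rev] at this
  linarith

section psi
variable {ψ : E3 → ℝ} {c : ℝ}

lemma psi_taylor (hc : 0 < c) (hs : ContDiff ℝ (⊤ : ℕ∞) ψ)
    (h2 : ∀ x, ‖iteratedFDeriv ℝ 2 ψ x‖ ≤ c * pE c x) (x y : E3) :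
    |ψ (x + y) - ψ x - fderiv ℝ ψ x y| ≤ c * ‖y‖ ^ 2 := by
  have hd : Differentiable ℝ ψ := hs.differentiable (by simp)
  have hd2 : Differentiable ℝ (fderiv ℝ ψ) :=
    (hs.fderiv_right (m := 1) (by norm_cast)).differentiable (by simp)
  have hb : ∀ x, ‖fderiv ℝ (fderiv ℝ ψ) x‖ ≤ c := by
    intro x
    have h := h2 x
    rw [show (2:ℕ) = 1 + 1 from rfl, ← norm_iteratedFDeriv_fderiv, norm_iteratedFDeriv_one] at h
    refine h.trans ?_
    nlinarith [pE_le_one hc x]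
  have hL : ∀ u, ‖fderiv ℝ ψ u - fderiv ℝ ψ x‖ ≤ c * ‖u - x‖ := fun u =>
    convex_univ.norm_image_sub_le_of_norm_fderiv_le (fun x _ => hd2 x) (fun x _ => hb x)
      (Set.mem_univ x) (Set.mem_univ u)
  have := (convex_closedBall x ‖y‖).norm_image_sub_le_of_norm_fderiv_le' (𝕜 := ℝ) (f := ψ)
    (φ := fderiv ℝ ψ x) (C := c * ‖y‖) (x := x) (y := x + y) (fun x _ => hd x)
    (fun u hu => (hL u).trans (by
      have : ‖u - x‖ ≤ ‖y‖ := by simpa [dist_eq_norm] using hu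
      gcongr)) (by simp) (by simp)
  rw [add_sub_cancel_left, Real.norm_eq_abs] at this
  linarith

lemma psi_diff_sq (hc : 0 < c) (hd : Differentiable ℝ ψ)
    (h0 : ∀ x, |ψ x| ≤ c * pE c x) (h1 : ∀ x, ‖fderiv ℝ ψ x‖ ≤ c * pE c x) (u y : E3) :
    (ψ (u + y) - ψ u) ^ 2 ≤
      2 * (c * Real.exp (1 / c)) ^ 2 * ‖y‖ ^ 2 * (pE c u + pE c (u + y)) := by
  have e1 : 1 ≤ Real.exp (1 / c) := Real.one_le_exp (by positivity)
  have hsq : ∀ v, pE c v ^ 2 ≤ pE c v := fun v => by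
    nlinarith [pE_pos c v, pE_le_one hc v]
  have p1 := pE_pos c u
  have p2 := pE_pos c (u + y)
  rcases le_total ‖y‖ 1 with hy | hy
  · have := (convex_closedBall u ‖y‖).norm_image_sub_le_of_norm_fderiv_le (𝕜 := ℝ) (f := ψ)
      (C := c * Real.exp (1 / c) * pE c u) (x := u) (y := u + y) (fun x _ => hd x)
      (fun v hv => (h1 v).trans (by
        have : ‖v - u‖ ≤ 1 := by
          have : ‖v - u‖ ≤ ‖y‖ := by simpa [dist_eq_norm] using hv
          linarith
        rw [mul_assoc]
        refine mul_le_mul_of_nonneg_left ((pE_shift hc v u).trans ?_) hc.le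
        gcongr)) (by simp) (by simp)
    rw [add_sub_cancel_left, Real.norm_eq_abs] at this
    have := pow_le_pow_left₀ (abs_nonneg _) this 2
    rw [sq_abs] at this
    refine this.trans ?_
    calc (c * Real.exp (1 / c) * pE c u * ‖y‖) ^ 2
        = 1 * (c * Real.exp (1 / c)) ^ 2 * ‖y‖ ^ 2 * (pE c u ^ 2) := by ring
      _ ≤ _ := by
        gcongr
        · norm_num
        · linarith [hsq u]
  · have : (ψ (u + y) - ψ u) ^ 2 ≤ 2 * (|ψ (u + y)| ^ 2 + |ψ u| ^ 2) := by
      rw [sq_abs, sq_abs]; nlinarith [sq_nonneg (ψ (u + y) + ψ u)]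
    refine this.trans ?_
    have a1 := pow_le_pow_left₀ (abs_nonneg _) (h0 u) 2
    have a2 := pow_le_pow_left₀ (abs_nonneg _) (h0 (u + y)) 2
    calc 2 * (|ψ (u + y)| ^ 2 + |ψ u| ^ 2) ≤ 2 * ((c * pE c (u + y)) ^ 2 + (c * pE c u) ^ 2) := by linarith
      _ = 2 * (c * 1) ^ 2 * 1 * (pE c u ^ 2 + pE c (u + y) ^ 2) := by ring
      _ ≤ _ := by
        gcongr
        · exact one_le_pow₀ hy
        · exact hsq u
        · exact hsq _

lemma phi_deriv (hc : 0 < c) (hs : ContDiff ℝ (⊤ : ℕ∞) ψ)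
    (h0 : ∀ x, |ψ x| ≤ c * pE c x) (h1 : ∀ x, ‖fderiv ℝ ψ x‖ ≤ c * pE c x)
    {K : ℝ} (hK : ∀ z : E3,
    Integrable (fun x => pk (z - x) * pE c x) ∧ ∫ x, pk (z - x) * pE c x ≤ K * pP z)
    (φ : E3 → ℝ) (hφ : ∀ z, φ z = ∫ x, pk (z - x) * ψ x ^ 2) (z : E3) :
    DifferentiableAt ℝ φ z ∧
    ∀ y, fderiv ℝ φ z y = ∫ x, pk (z - x) * (2 * ψ x * fderiv ℝ ψ x y) := by
  have hd : Differentiable ℝ ψ := hs.differentiable (by simp)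
  have hcψ : Continuous ψ := hs.continuous
  have hcd : Continuous (fderiv ℝ ψ) := hs.continuous_fderiv (by simp)
  have hb0 : ∀ x, |ψ x| ≤ c := fun x => (h0 x).trans (by nlinarith [pE_le_one hc x])
  have hφ' : φ = fun z => ∫ x, pk x * ψ (z - x) ^ 2 := by
    funext z
    rw [hφ, ← integral_sub_left_eq_self _ volume z]
    simp
  have mk := pk_meas
  have hFm : ∀ z, AEStronglyMeasurable (fun x => pk x * ψ (z - x) ^ 2) volume := fun z => by
    apply Measurable.aestronglyMeasurable
    have := hcψ.measurable
    fun_prop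
  set F' : E3 → E3 → E3 →L[ℝ] ℝ := fun z x => (pk x * (2 * ψ (z - x))) • fderiv ℝ ψ (z - x) with hF'
  have hF'm : AEStronglyMeasurable (F' z) volume := by
    refine AEStronglyMeasurable.smul (f := fun x => pk x * (2 * ψ (z - x)))
      (g := fun x => fderiv ℝ ψ (z - x)) ?_ ?_
    · apply Measurable.aestronglyMeasurable
      have := hcψ.measurable
      fun_prop
    · exact (hcd.comp (by fun_prop)).aestronglyMeasurable
  have hkz : Integrable (fun x => pk x * pE c (z - x)) := by
    have := (hK z).1.comp_sub_left z
    simpa using this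
  set bound : E3 → ℝ := fun x => (2 * c * c * Real.exp (1 / c)) * (pk x * pE c (z - x)) with hbd
  have hbi : Integrable bound := hkz.const_mul _
  have hbound : ∀ x, ∀ z' ∈ Metric.ball z 1, ‖F' z' x‖ ≤ bound x := by
    intro x z' hz'
    have hz' : ‖z' - z‖ < 1 := by simpa [dist_eq_norm] using hz'
    rw [hF', norm_smul, norm_mul, norm_mul, Real.norm_of_nonneg (pk_nonneg x)]
    have e : pE c (z' - x) ≤ Real.exp (1 / c) * pE c (z - x) := by
      refine (pE_shift hc (z' - x) (z - x)).trans ?_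
      have := (pE_pos c (z - x)).le
      rw [sub_sub_sub_cancel_right]
      gcongr
    have k0 := pk_nonneg x
    calc pk x * (‖(2:ℝ)‖ * ‖ψ (z' - x)‖) * ‖fderiv ℝ ψ (z' - x)‖
        ≤ pk x * (2 * c) * (c * (Real.exp (1 / c) * pE c (z - x))) := by
          gcongr
          · simp
          · exact hb0 _
          · exact (h1 _).trans (by gcongr)
      _ = _ := by rw [hbd]; ring
  have hF0 : Integrable (fun x => pk x * ψ (z - x) ^ 2) := by
    refine (hkz.const_mul (c * c)).mono' (hFm z) (Filter.Eventually.of_forall fun x => ?_)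
    rw [norm_mul, Real.norm_of_nonneg (pk_nonneg x), norm_pow, Real.norm_eq_abs]
    have k0 := pk_nonneg x
    calc pk x * |ψ (z - x)| ^ 2 = pk x * (|ψ (z - x)| * |ψ (z - x)|) := by ring
      _ ≤ pk x * (c * (c * pE c (z - x))) := by
        gcongr
        · exact hb0 _
        · exact h0 _
      _ = _ := by ring
  have key := hasFDerivAt_integral_of_dominated_of_fderiv_le (μ := volume) (𝕜 := ℝ)
    (F := fun z x => pk x * ψ (z - x) ^ 2) (F' := F') (x₀ := z) (bound := bound)
    (Metric.ball_mem_nhds z one_pos)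
    (Filter.Eventually.of_forall hFm) hF0 hF'm (Filter.Eventually.of_forall hbound) hbi
    (Filter.Eventually.of_forall fun x z' _ => by
      have h := ((hd (z' - x)).hasFDerivAt.comp z' ((hasFDerivAt_id z').sub_const x))
      have h := (h.pow 2).const_mul (pk x)
      have e : F' z' x = pk x • (2 • (ψ ∘ fun x_1 => id x_1 - x) z' ^ (2 - 1)) •
          (fderiv ℝ ψ (z' - x)).comp (ContinuousLinearMap.id ℝ E3) := by
        ext v
        simp [hF']
        ring
      rw [e]
      exact h)
  rw [← hφ'] at key
  refine ⟨key.differentiableAt, fun y => ?_⟩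
  rw [key.fderiv, ContinuousLinearMap.integral_apply, ← integral_sub_left_eq_self _ volume z]
  · refine integral_congr_ae (Filter.Eventually.of_forall fun x => ?_)
    show ((pk (z - x) * (2 * ψ (z - (z - x)))) • fderiv ℝ ψ (z - (z - x))) y = _
    simp
    ring
  · exact hbi.mono' hF'm (Filter.Eventually.of_forall fun x => hbound x z (by simp))

end psi

section bounds
variable {ψ : E3 → ℝ} {c : ℝ}

lemma w_bound (hc : 0 < c) (hs : ContDiff ℝ (⊤ : ℕ∞) ψ)
    (h0 : ∀ x, |ψ x| ≤ c * pE c x) (h1 : ∀ x, ‖fderiv ℝ ψ x‖ ≤ c * pE c x)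
    (h2 : ∀ x, ‖iteratedFDeriv ℝ 2 ψ x‖ ≤ c * pE c x)
    {K : ℝ} (hK : ∀ z : E3,
    Integrable (fun x => pk (z - x) * pE c x) ∧ ∫ x, pk (z - x) * pE c x ≤ K * pP z)
    (φ : E3 → ℝ) (hφ : ∀ z, φ z = ∫ x, pk (z - x) * ψ x ^ 2) (y z : E3) :
    |φ z - φ (z - y) - fderiv ℝ φ z y| ≤
      (2 * (c * Real.exp (1 / c)) ^ 2 + 2 * c ^ 2) * K * ‖y‖ ^ 2 * (pP z + pP (z - y)) := by
  have hd : Differentiable ℝ ψ := hs.differentiable (by simp)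
  have hcψ : Continuous ψ := hs.continuous
  have hcd : Continuous (fderiv ℝ ψ) := hs.continuous_fderiv (by simp)
  have hb0 : ∀ x, |ψ x| ≤ c := fun x => (h0 x).trans (by nlinarith [pE_le_one hc x])
  have i1 : ∀ z, Integrable (fun x => pk (z - x) * ψ x ^ 2) := fun z =>
    (pk_conv hK (fun x => ψ x ^ 2) (by fun_prop) (c * c) (by positivity) (fun x => by
      rw [abs_pow, pow_two, mul_assoc]
      exact mul_le_mul (hb0 x) (h0 x) (abs_nonneg _) hc.le) z).1
  have i2 : Integrable (fun x => pk (z - x) * (2 * ψ x * fderiv ℝ ψ x y)) :=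
    (pk_conv hK (fun x => 2 * ψ x * fderiv ℝ ψ x y) (by fun_prop) (2 * c * (c * ‖y‖)) (by positivity)
    (fun x => by
      rw [abs_mul, abs_mul]
      have := (fderiv ℝ ψ x).le_opNorm y
      rw [Real.norm_eq_abs] at this
      calc |2| * |ψ x| * |fderiv ℝ ψ x y| ≤ 2 * c * (c * pE c x * ‖y‖) := by
            gcongr
            · simp
            · exact hb0 x
            · exact this.trans (by gcongr; exact h1 x)
        _ = _ := by ring) z).1
  have hsh : ∀ g : E3 → ℝ, (fun x => pk (z - y - x) * g x) = fun x => (fun x => pk (z - x) * g (x - y)) (x + y) := by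
    intro g; funext x
    simp only [add_sub_cancel_right]
    congr 2; abel
  have i3 : Integrable (fun x => pk (z - x) * ψ (x - y) ^ 2) := by
    have := i1 (z - y)
    rw [hsh (fun x => ψ x ^ 2)] at this
    simpa using this.comp_sub_right y
  have i4 : Integrable (fun x => pk (z - x) * pE c (x - y)) := by
    have := (hK (z - y)).1
    rw [hsh (pE c)] at this
    simpa using this.comp_sub_right y
  have e4 : ∫ x, pk (z - x) * pE c (x - y) ≤ K * pP (z - y) := by
    have := (hK (z - y)).2
    rwa [hsh (pE c), integral_add_right_eq_self (fun x => pk (z - x) * pE c (x - y))] at this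
  have e3 : φ (z - y) = ∫ x, pk (z - x) * ψ (x - y) ^ 2 := by
    rw [hφ, hsh (fun x => ψ x ^ 2), integral_add_right_eq_self (fun x => pk (z - x) * ψ (x - y) ^ 2)]
  have i13 : Integrable (fun x => pk (z - x) * ψ x ^ 2 - pk (z - x) * ψ (x - y) ^ 2) := (i1 z).sub i3
  rw [(phi_deriv hc hs h0 h1 hK φ hφ z).2 y, e3, hφ z, ← integral_sub (i1 z) i3, ← integral_sub i13 i2]
  set A := 2 * (c * Real.exp (1 / c)) ^ 2
  have hA : 0 ≤ A := by positivity
  have hb : ∀ x, ‖pk (z - x) * ψ x ^ 2 - pk (z - x) * ψ (x - y) ^ 2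
      - pk (z - x) * (2 * ψ x * fderiv ℝ ψ x y)‖ ≤
      ((A + 2 * c ^ 2) * ‖y‖ ^ 2) * (pk (z - x) * pE c x + pk (z - x) * pE c (x - y)) := by
    intro x
    have t := psi_taylor hc hs h2 x (-y)
    have q := psi_diff_sq hc hd h0 h1 x (-y)
    rw [← sub_eq_add_neg] at t q
    rw [norm_neg] at t q
    rw [map_neg] at t
    have k0 := pk_nonneg (z - x)
    have E0 := pE_pos c x
    have E1 := pE_pos c (x - y)
    have : pk (z - x) * ψ x ^ 2 - pk (z - x) * ψ (x - y) ^ 2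
      - pk (z - x) * (2 * ψ x * fderiv ℝ ψ x y) =
      -(pk (z - x) * ((ψ (x - y) - ψ x) ^ 2 + 2 * ψ x * (ψ (x - y) - ψ x - -fderiv ℝ ψ x y))) := by ring
    rw [this, norm_neg, norm_mul, Real.norm_of_nonneg k0]
    calc pk (z - x) * ‖(ψ (x - y) - ψ x) ^ 2 + 2 * ψ x * (ψ (x - y) - ψ x - -fderiv ℝ ψ x y)‖
        ≤ pk (z - x) * ((A * ‖y‖ ^ 2 * (pE c x + pE c (x - y))) + 2 * (c * (pE c x + pE c (x - y))) * (c * ‖y‖ ^ 2)) := by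
          gcongr
          refine (norm_add_le _ _).trans ?_
          rw [Real.norm_of_nonneg (sq_nonneg _), norm_mul, norm_mul, Real.norm_eq_abs, Real.norm_eq_abs, Real.norm_eq_abs]
          gcongr
          · simp
          · exact (h0 x).trans (by gcongr; linarith)
      _ = _ := by ring
  have hi := ((hK z).1.add i4).const_mul ((A + 2 * c ^ 2) * ‖y‖ ^ 2)
  have := norm_integral_le_of_norm_le hi (Filter.Eventually.of_forall hb)
  rw [← Real.norm_eq_abs]
  refine this.trans ?_
  simp only [Pi.add_apply]
  rw [integral_const_mul, integral_add (hK z).1 i4]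
  calc _ ≤ ((A + 2 * c ^ 2) * ‖y‖ ^ 2) * (K * pP z + K * pP (z - y)) := by
        gcongr
        exact (hK z).2
    _ = _ := by ring

lemma H_bound (hc : 0 < c) (hs : ContDiff ℝ (⊤ : ℕ∞) ψ)
    (h0 : ∀ x, |ψ x| ≤ c * pE c x) (h1 : ∀ x, ‖fderiv ℝ ψ x‖ ≤ c * pE c x)
    (hnorm : ∫ x, ψ x ^ 2 = 1) (y : E3) :
    |(∫ x, ψ x * ψ (x + y)) - 1| ≤ 2 * (c * Real.exp (1 / c)) ^ 2 * (∫ x, pE c x) * ‖y‖ ^ 2 := by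
  have hd : Differentiable ℝ ψ := hs.differentiable (by simp)
  have hcψ : Continuous ψ := hs.continuous
  have hb0 : ∀ x, |ψ x| ≤ c := fun x => (h0 x).trans (by nlinarith [pE_le_one hc x])
  have hE := pE_int hc
  have i1 : Integrable (fun x => ψ x ^ 2) := by
    refine (hE.const_mul (c * c)).mono' (by fun_prop) (Filter.Eventually.of_forall fun x => ?_)
    rw [norm_pow, pow_two, mul_assoc]
    exact mul_le_mul (hb0 x) (h0 x) (abs_nonneg _) hc.le
  have i2 : Integrable (fun x => ψ (x + y) ^ 2) := i1.comp_add_right y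
  have i3 : Integrable (fun x => ψ x * ψ (x + y)) := by
    refine (hE.const_mul (c * c)).mono' (by fun_prop) (Filter.Eventually.of_forall fun x => ?_)
    rw [norm_mul, mul_assoc, mul_comm]
    exact mul_le_mul (hb0 (x + y)) (h0 x) (abs_nonneg _) hc.le
  have e2 : ∫ x, ψ (x + y) ^ 2 = 1 := by
    rw [integral_add_right_eq_self (fun x => ψ x ^ 2), hnorm]
  have e : ∫ x, (ψ (x + y) - ψ x) ^ 2 = 2 - 2 * ∫ x, ψ x * ψ (x + y) := by
    have : (fun x => (ψ (x + y) - ψ x) ^ 2) = fun x => (ψ (x + y) ^ 2 + ψ x ^ 2) - 2 * (ψ x * ψ (x + y)) := by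
      funext x; ring
    have i21 : Integrable (fun x => ψ (x + y) ^ 2 + ψ x ^ 2) := i2.add i1
    rw [this, integral_sub i21 (i3.const_mul 2), integral_add i2 i1, e2, hnorm, integral_const_mul]
    ring
  set A := 2 * (c * Real.exp (1 / c)) ^ 2
  have hE2 : Integrable (fun x => pE c (x + y)) := hE.comp_add_right y
  have hle : ∫ x, (ψ (x + y) - ψ x) ^ 2 ≤ ∫ x, A * ‖y‖ ^ 2 * (pE c x + pE c (x + y)) := by
    apply integral_mono_of_nonneg (Filter.Eventually.of_forall fun x => sq_nonneg _)
    · exact (hE.add hE2).const_mul _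
    · exact Filter.Eventually.of_forall fun x => psi_diff_sq hc hd h0 h1 x y
  rw [integral_const_mul, integral_add hE hE2, integral_add_right_eq_self (pE c)] at hle
  have hnn : 0 ≤ ∫ x, (ψ (x + y) - ψ x) ^ 2 := integral_nonneg fun x => sq_nonneg _
  rw [abs_le]
  constructor <;> nlinarith

lemma l_bound (hc : 0 < c) (hs : ContDiff ℝ (⊤ : ℕ∞) ψ)
    (h0 : ∀ x, |ψ x| ≤ c * pE c x) (h1 : ∀ x, ‖fderiv ℝ ψ x‖ ≤ c * pE c x)
    (h2 : ∀ x, ‖iteratedFDeriv ℝ 2 ψ x‖ ≤ c * pE c x)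
    (hnorm : ∫ x, ψ x ^ 2 = 1)
    {K : ℝ} (hK0 : 0 < K) (hK : ∀ z : E3,
    Integrable (fun x => pk (z - x) * pE c x) ∧ ∫ x, pk (z - x) * pE c x ≤ K * pP z)
    (φ : E3 → ℝ) (hφ : ∀ z, φ z = ∫ x, pk (z - x) * ψ x ^ 2) (y z : E3) :
    |φ z| ≤ c * c * K * pP z ∧ |fderiv ℝ φ z y| ≤ 2 * c * c * K * ‖y‖ * pP z ∧
    |(∫ x, ψ x * ψ (x + y)) * φ z - (∫ x, pk (z - x) * (ψ x * ψ (x + y))) + 1 / 2 * fderiv ℝ φ z y| ≤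
      (2 * (c * Real.exp (1 / c)) ^ 2 * (∫ x, pE c x) * (c * c * K) + c * c * K) * ‖y‖ ^ 2 * pP z := by
  have hd : Differentiable ℝ ψ := hs.differentiable (by simp)
  have hcψ : Continuous ψ := hs.continuous
  have hcd : Continuous (fderiv ℝ ψ) := hs.continuous_fderiv (by simp)
  have hb0 : ∀ x, |ψ x| ≤ c := fun x => (h0 x).trans (by nlinarith [pE_le_one hc x])
  have i1 := 
    (pk_conv hK (fun x => ψ x ^ 2) (by fun_prop) (c * c) (by positivity) (fun x => by
      rw [abs_pow, pow_two, mul_assoc]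
      exact mul_le_mul (hb0 x) (h0 x) (abs_nonneg _) hc.le) z)
  have i2 :=
    (pk_conv hK (fun x => 2 * ψ x * fderiv ℝ ψ x y) (by fun_prop) (2 * c * (c * ‖y‖)) (by positivity)
    (fun x => by
      rw [abs_mul, abs_mul]
      have := (fderiv ℝ ψ x).le_opNorm y
      rw [Real.norm_eq_abs] at this
      calc |2| * |ψ x| * |fderiv ℝ ψ x y| ≤ 2 * c * (c * pE c x * ‖y‖) := by
            gcongr
            · simp
            · exact hb0 x
            · exact this.trans (by gcongr; exact h1 x)
        _ = _ := by ring) z)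
  have i3 := (pk_conv hK (fun x => ψ x * ψ (x + y)) (by fun_prop) (c * c) (by positivity) (fun x => by
      rw [abs_mul, mul_comm, mul_assoc]
      exact mul_le_mul (hb0 (x + y)) (h0 x) (abs_nonneg _) hc.le) z)
  have i4 := (pk_conv hK (fun x => ψ x * (ψ (x + y) - ψ x - fderiv ℝ ψ x y)) (by fun_prop) (c * (c * ‖y‖ ^ 2)) (by positivity) (fun x => by
      rw [abs_mul]
      have := psi_taylor hc hs h2 x y
      have p := (pE_pos c x).le
      calc |ψ x| * |ψ (x + y) - ψ x - fderiv ℝ ψ x y| ≤ (c * pE c x) * (c * ‖y‖ ^ 2) := by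
            gcongr
            exact h0 x
        _ = _ := by ring) z)
  have hφz := i1.2
  rw [← hφ z] at hφz
  have hf := (phi_deriv hc hs h0 h1 hK φ hφ z).2 y
  refine ⟨hφz, ?_, ?_⟩
  · rw [hf]
    refine i2.2.trans (le_of_eq ?_)
    ring
  · have e : ∫ x, pk (z - x) * (ψ x * (ψ (x + y) - ψ x - fderiv ℝ ψ x y)) =
      (∫ x, pk (z - x) * (ψ x * ψ (x + y))) - φ z - 1 / 2 * fderiv ℝ φ z y := by
      have i31 : Integrable (fun x => pk (z - x) * (ψ x * ψ (x + y)) - pk (z - x) * ψ x ^ 2) := i3.1.sub i1.1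
      rw [hf, hφ z, ← integral_sub i3.1 i1.1, ← integral_const_mul,
        ← integral_sub i31 (i2.1.const_mul _)]
      refine integral_congr_ae (Filter.Eventually.of_forall fun x => ?_)
      ring
    have hH := H_bound hc hs h0 h1 hnorm y
    set Hy := ∫ x, ψ x * ψ (x + y)
    have e2 : Hy * φ z - (∫ x, pk (z - x) * (ψ x * ψ (x + y))) + 1 / 2 * fderiv ℝ φ z y =
      (Hy - 1) * φ z - ∫ x, pk (z - x) * (ψ x * (ψ (x + y) - ψ x - fderiv ℝ ψ x y)) := by
      rw [e]; ring
    rw [e2]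
    refine (abs_sub _ _).trans ?_
    rw [abs_mul]
    refine (add_le_add (mul_le_mul hH hφz (abs_nonneg _) ((abs_nonneg _).trans hH)) i4.2).trans (le_of_eq ?_)
    ring

end bounds

lemma pyth (u v : E3 → ℂ) (hu : MemLp u 2 volume) (hv : MemLp v 2 volume)
    (h : ∫ z, conj (u z) * v z = 0) :
    ∫ z, ‖u z + v z‖ ^ 2 = (∫ z, ‖u z‖ ^ 2) + ∫ z, ‖v z‖ ^ 2 := by
  have iu := (memLp_two_iff_integrable_sq_norm hu.1).1 hu
  have iv := (memLp_two_iff_integrable_sq_norm hv.1).1 hv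
  have hcu : MemLp (fun z => conj (u z)) 2 volume := hu.star
  have iuv : Integrable (fun z => conj (u z) * v z) := hcu.integrable_mul hv
  have e : ∀ z, ‖u z + v z‖ ^ 2 = ‖u z‖ ^ 2 + ‖v z‖ ^ 2 + 2 * (conj (u z) * v z).re := by
    intro z
    rw [← Complex.normSq_eq_norm_sq, ← Complex.normSq_eq_norm_sq, ← Complex.normSq_eq_norm_sq]
    simp [Complex.normSq_apply]
    ring
  simp_rw [e]
  have ire : Integrable (fun z => (conj (u z) * v z).re) := iuv.re
  have iuv' : Integrable (fun z => ‖u z‖ ^ 2 + ‖v z‖ ^ 2) := iu.add iv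
  rw [integral_add iuv' (ire.const_mul 2), integral_add iu iv, integral_const_mul]
  have : ∫ z, (conj (u z) * v z).re = 0 := by
    have := integral_re iuv
    simp only [RCLike.re_to_complex] at this
    rw [this, h]; simp
  rw [this]; ring

lemma memLp_of_pP {f : E3 → ℂ} {M : ℝ} (hf : AEStronglyMeasurable f volume)
    (h : ∀ᵐ z, ‖f z‖ ≤ M * pP z) : MemLp f 2 volume := by
  have hP : MemLp pP 2 volume :=
    (memLp_two_iff_integrable_sq pP_cont.aestronglyMeasurable).2 pP_sq_int
  refine hP.of_le_mul (c := M) hf ?_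
  filter_upwards [h] with z hz
  rwa [Real.norm_of_nonneg (pP_pos z).le]

/-- In the setting of a smooth, radial, positive, normalized,
exponentially decaying `ψ` with Pekar field `φ`, overlap `H`, `l_y` and
`w_{0,y} = φ − τ_y φ`, writing `l_y = l₀ + l₁` for the (unique a.e.) orthogonal
decomposition in `L²(ℝ³;ℂ)` with `l₀ ∈ span{∂₁φ,∂₂φ,∂₃φ}` and
`l₁ ⊥ span{∂₁φ,∂₂φ,∂₃φ}` (i.e. `l₀ = Π₀ l_y`, `l₁ = Π₁ l_y`), there is `C > 0`
such that for all `y`: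
`‖w_{0,y} − (y·∇)φ‖_{L²} + ‖Π₁ l_y‖_{L²} + ‖Π₀ l_y + ½(y·∇)φ‖_{L²} ≤ C|y|²`. -/
theorem statement12
    (ψ : EuclideanSpace ℝ (Fin 3) → ℝ) (C₀ : ℝ) (hC₀ : 0 < C₀)
    (hsmooth : ContDiff ℝ (⊤ : ℕ∞) ψ)
    (hpos : ∀ x, 0 < ψ x)
    (hradial : ∃ f : ℝ → ℝ, ∀ x, ψ x = f ‖x‖)
    (hnorm : ∫ x, ψ x ^ 2 = 1)
    (hdecay : ∀ k : ℕ, k ≤ 2 → ∀ x,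
      ‖iteratedFDeriv ℝ k ψ x‖ ≤ C₀ * Real.exp (-‖x‖ / C₀))
    (φ : EuclideanSpace ℝ (Fin 3) → ℝ)
    (hφ : ∀ z, φ z = ∫ x, ψ x ^ 2 / (2 * π ^ 2 * ‖z - x‖ ^ 2))
    (H : EuclideanSpace ℝ (Fin 3) → ℝ)
    (hH : ∀ y, H y = ∫ x, ψ x * ψ (x + y))
    (l : EuclideanSpace ℝ (Fin 3) → EuclideanSpace ℝ (Fin 3) → ℝ)
    (hl : ∀ y z, l y z =
      H y * φ z - ∫ x, ψ x * ψ (x + y) / (2 * π ^ 2 * ‖x - z‖ ^ 2))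
    (dφ : Fin 3 → EuclideanSpace ℝ (Fin 3) → ℝ)
    (hdφ : ∀ i z, dφ i z = fderiv ℝ φ z (EuclideanSpace.single i 1))
    (w0 : EuclideanSpace ℝ (Fin 3) → EuclideanSpace ℝ (Fin 3) → ℝ)
    (hw0 : ∀ y z, w0 y z = φ z - φ (z - y)) :
    ∃ C > 0, ∀ y : EuclideanSpace ℝ (Fin 3),
      ∀ l0 l1 : EuclideanSpace ℝ (Fin 3) → ℂ,
        (∃ a : Fin 3 → ℂ, ∀ᵐ z, l0 z = ∑ i, a i * (dφ i z : ℂ)) →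
        (∀ i, ∫ z, conj ((dφ i z : ℂ)) * l1 z = 0) →
        (∀ᵐ z, (l y z : ℂ) = l0 z + l1 z) →
        Real.sqrt (∫ z, (w0 y z - ∑ i, y i * dφ i z) ^ 2) +
          Real.sqrt (∫ z, ‖l1 z‖ ^ 2) +
          Real.sqrt (∫ z, ‖l0 z + (1 / 2) * ∑ i, (y i : ℂ) * (dφ i z : ℂ)‖ ^ 2) ≤
        C * ‖y‖ ^ 2 := by

  have h0 : ∀ x, |ψ x| ≤ C₀ * pE C₀ x := fun x => by
    have := hdecay 0 (by norm_num) x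
    rwa [norm_iteratedFDeriv_zero, Real.norm_eq_abs] at this
  have h1 : ∀ x, ‖fderiv ℝ ψ x‖ ≤ C₀ * pE C₀ x := fun x => by
    have := hdecay 1 (by norm_num) x
    rwa [norm_iteratedFDeriv_one] at this
  have h2 : ∀ x, ‖iteratedFDeriv ℝ 2 ψ x‖ ≤ C₀ * pE C₀ x := fun x => hdecay 2 le_rfl x
  obtain ⟨K, hK0, hK⟩ := pk_pE hC₀
  have hφ' : ∀ z, φ z = ∫ x, pk (z - x) * ψ x ^ 2 := fun z => by
    rw [hφ]
    congr 1; funext x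
    rw [div_eq_mul_inv, mul_comm]; rfl
  have hl' : ∀ y z, l y z = (∫ x, ψ x * ψ (x + y)) * φ z -
      ∫ x, pk (z - x) * (ψ x * ψ (x + y)) := fun y z => by
    rw [hl, hH]
    congr 2; funext x
    rw [div_eq_mul_inv, mul_comm, norm_sub_rev]; rfl
  have hsum : ∀ (y z : E3), ∑ i, y i * dφ i z = fderiv ℝ φ z y := fun y z => by
    conv_rhs => rw [← (EuclideanSpace.basisFun (Fin 3) ℝ).sum_repr y]
    rw [map_sum]
    refine Finset.sum_congr rfl fun i _ => ?_
    rw [hdφ]; simp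
  set A := (2 * (C₀ * Real.exp (1 / C₀)) ^ 2 + 2 * C₀ ^ 2) * K with hA
  set B := (2 * (C₀ * Real.exp (1 / C₀)) ^ 2 * (∫ x, pE C₀ x) * (C₀ * C₀ * K) + C₀ * C₀ * K) with hB
  have hA0 : 0 ≤ A := by positivity
  have hB0 : 0 ≤ B := by
    have : 0 ≤ ∫ x, pE C₀ x := integral_nonneg fun x => (pE_pos _ x).le
    positivity
  set S := ∫ z : E3, pP z ^ 2 with hS
  have hS0 : 0 ≤ S := integral_nonneg fun x => sq_nonneg _
  have hφd : Differentiable ℝ φ := fun z => (phi_deriv hC₀ hsmooth h0 h1 hK φ hφ' z).1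
  have LB := fun y z => l_bound hC₀ hsmooth h0 h1 h2 hnorm hK0 hK φ hφ' y z
  have dm : ∀ i, MemLp (fun z => (dφ i z : ℂ)) 2 volume := fun i => by
    refine memLp_of_pP (M := 2 * C₀ * C₀ * K * 1) ?_ (Filter.Eventually.of_forall fun z => ?_)
    · have : dφ i = fun z => fderiv ℝ φ z (EuclideanSpace.single i 1) := funext (hdφ i)
      rw [this]
      exact (Complex.measurable_ofReal.comp (measurable_fderiv_apply_const ℝ φ _)).aestronglyMeasurable
    · have := (LB (EuclideanSpace.single i 1) z).2.1
      simpa [hdφ] using this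
  have lm : ∀ y, MemLp (fun z => (l y z : ℂ)) 2 volume := fun y => by
    refine memLp_of_pP (M := B * ‖y‖ ^ 2 + 2 * C₀ * C₀ * K * ‖y‖) ?_ (Filter.Eventually.of_forall fun z => ?_)
    · refine (Complex.measurable_ofReal.comp ?_).aestronglyMeasurable
      have e : l y = fun z => (∫ x, ψ x * ψ (x + y)) * φ z -
        ∫ x, pk (z - x) * (ψ x * ψ (x + y)) := funext (hl' y)
      rw [e]
      have m1 : Measurable φ := hφd.continuous.measurable
      have m2 : StronglyMeasurable (fun z : E3 => ∫ x, pk (z - x) * (ψ x * ψ (x + y))) := by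
        apply StronglyMeasurable.integral_prod_right (f := fun z x => pk (z - x) * (ψ x * ψ (x + y)))
        apply Measurable.stronglyMeasurable
        have := pk_meas
        have := hsmooth.continuous.measurable
        fun_prop
      exact (m1.const_mul _).sub m2.measurable
    · have b1 := (LB y z).2.1
      have b2 := (LB y z).2.2
      rw [← hl'] at b2
      rw [Complex.norm_real, Real.norm_eq_abs]
      have := pP_pos z
      have e : l y z = (l y z + 1 / 2 * fderiv ℝ φ z y) - 1 / 2 * fderiv ℝ φ z y := by ring
      rw [e]
      refine (abs_sub _ _).trans ?_
      rw [abs_mul (1 / 2), abs_of_pos (by norm_num : (0:ℝ) < 1 / 2)]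
      have := abs_nonneg (fderiv ℝ φ z y)
      rw [add_mul]
      linarith
  refine ⟨2 * A * √S + B * √S + B * √S + 1, by positivity, fun y l0 l1 ⟨a, ha⟩ hort hdec => ?_⟩
  -- first term
  have T1 : √(∫ z, (w0 y z - ∑ i, y i * dφ i z) ^ 2) ≤ 2 * A * √S * ‖y‖ ^ 2 := by
    have i1 := pP_sq_int
    have i2 : Integrable (fun z => pP (z - y) ^ 2) := i1.comp_sub_right y
    have : ∫ z, (w0 y z - ∑ i, y i * dφ i z) ^ 2 ≤
        ∫ z, 2 * (A * ‖y‖ ^ 2) ^ 2 * (pP z ^ 2 + pP (z - y) ^ 2) := by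
      apply integral_mono_of_nonneg (Filter.Eventually.of_forall fun x => sq_nonneg _)
      · exact (i1.add i2).const_mul _
      · refine Filter.Eventually.of_forall fun z => ?_
        have := w_bound hC₀ hsmooth h0 h1 h2 hK φ hφ' y z
        have := pow_le_pow_left₀ (abs_nonneg _) this 2
        rw [sq_abs] at this
        simp only [hw0, hsum]
        refine this.trans ?_
        rw [mul_pow]
        have : (pP z + pP (z - y)) ^ 2 ≤ 2 * (pP z ^ 2 + pP (z - y) ^ 2) := by
          nlinarith [sq_nonneg (pP z - pP (z - y))]
        nlinarith [sq_nonneg (A * ‖y‖ ^ 2)]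
    rw [integral_const_mul, integral_add i1 i2, integral_sub_right_eq_self (fun z => pP z ^ 2)] at this
    apply Real.sqrt_le_iff.2 ⟨by positivity, this.trans (le_of_eq ?_)⟩
    rw [← hS, show (2 * A * √S * ‖y‖ ^ 2) ^ 2 = 4 * A ^ 2 * (√S) ^ 2 * ‖y‖ ^ 4 by ring, Real.sq_sqrt hS0]
    ring
  -- the orthogonal decomposition
  set u : E3 → ℂ := fun z => l0 z + (1 / 2) * ∑ i, (y i : ℂ) * (dφ i z : ℂ) with hu
  have hl0 : MemLp l0 2 volume := by
    have : MemLp (fun z => ∑ i, a i * (dφ i z : ℂ)) 2 volume :=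
      memLp_finsetSum _ fun i _ => (dm i).const_mul (a i)
    exact this.ae_eq (by filter_upwards [ha] with z hz using hz.symm)
  have hl1 : MemLp l1 2 volume := by
    refine ((lm y).sub hl0).ae_eq ?_
    filter_upwards [hdec] with z hz
    simp [hz]
  have hum : MemLp u 2 volume := by
    refine hl0.add ?_
    have : MemLp (fun z => ∑ i, (y i : ℂ) * (dφ i z : ℂ)) 2 volume :=
      memLp_finsetSum _ fun i _ => (dm i).const_mul _
    exact this.const_mul _
  have hue : ∀ᵐ z, u z = ∑ i, (a i + 1 / 2 * (y i : ℂ)) * (dφ i z : ℂ) := by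
    filter_upwards [ha] with z hz
    simp only [hu]
    rw [hz, Finset.mul_sum, ← Finset.sum_add_distrib]
    exact Finset.sum_congr rfl fun i _ => by ring
  have horth : ∫ z, conj (u z) * l1 z = 0 := by
    have e : ∫ z, conj (u z) * l1 z =
        ∫ z, ∑ i, conj (a i + 1 / 2 * (y i : ℂ)) * (conj (dφ i z : ℂ) * l1 z) := by
      refine integral_congr_ae ?_
      filter_upwards [hue] with z hz
      rw [hz, map_sum, Finset.sum_mul]
      exact Finset.sum_congr rfl fun i _ => by rw [map_mul]; ring
    have hi : ∀ i, Integrable (fun z => conj (dφ i z : ℂ) * l1 z) := fun i =>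
      (dm i).star.integrable_mul hl1
    rw [e, integral_finsetSum _ fun i _ => (hi i).const_mul _]
    refine Finset.sum_eq_zero fun i _ => ?_
    rw [integral_const_mul, hort i, mul_zero]
  have P := pyth u l1 hum hl1 horth
  have tot : ∫ z, ‖u z + l1 z‖ ^ 2 ≤ (B * √S * ‖y‖ ^ 2) ^ 2 := by
    have : ∫ z, ‖u z + l1 z‖ ^ 2 ≤ ∫ z, (B * ‖y‖ ^ 2) ^ 2 * pP z ^ 2 := by
      apply integral_mono_of_nonneg (Filter.Eventually.of_forall fun x => sq_nonneg _)
      · exact pP_sq_int.const_mul _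
      · filter_upwards [hdec] with z hz
        have e : u z + l1 z = ((l y z + 1 / 2 * fderiv ℝ φ z y : ℝ) : ℂ) := by
          rw [← hsum]
          push_cast
          rw [hz]
          simp only [hu]
          ring
        have b2 := (LB y z).2.2
        rw [← hl'] at b2
        rw [e, Complex.norm_real, Real.norm_eq_abs, ← mul_pow]
        exact pow_le_pow_left₀ (abs_nonneg _) b2 2
    rw [integral_const_mul] at this
    refine this.trans (le_of_eq ?_)
    rw [← hS, show (B * √S * ‖y‖ ^ 2) ^ 2 = B ^ 2 * (√S) ^ 2 * ‖y‖ ^ 4 by ring, Real.sq_sqrt hS0]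
    ring
  have n1 : 0 ≤ ∫ z, ‖u z‖ ^ 2 := integral_nonneg fun z => sq_nonneg _
  have n2 : 0 ≤ ∫ z, ‖l1 z‖ ^ 2 := integral_nonneg fun z => sq_nonneg _
  have T2 : √(∫ z, ‖l1 z‖ ^ 2) ≤ B * √S * ‖y‖ ^ 2 :=
    Real.sqrt_le_iff.2 ⟨by positivity, by linarith⟩
  have T3 : √(∫ z, ‖u z‖ ^ 2) ≤ B * √S * ‖y‖ ^ 2 :=
    Real.sqrt_le_iff.2 ⟨by positivity, by linarith⟩
  have := sq_nonneg ‖y‖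
  linarith
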